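/- Every connected finite simple graph that is neither a complete graph nor an odd cycle has chromatic number at most its maximum degree (Brooks' theorem). -/

import Mathlib

/-!
The proof follows Zajac's path argument, with `k` colours where `k` is the maximum degree.

A *partial colouring* is a map `c : V → Fin k` that is proper on a set `T`. It extends to a vertex
`x ∉ T` of degree at most `k` as soon as `x` has a neighbour outside `T`, or two neighbours in `T`
of the same colour (`exists_free_of_outside`, `exists_free_of_repeat`). Hence it extends greedily
along a path outside `T`, the last vertex excepted (`greedy`). In a connected graph every set
`T ≠ univ` has a colouring, since some vertex of `T` has a neighbour outside `T` and can be coloured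
last (`exists_properOn`).

* If a cycle `C` does not contain all vertices and has a vertex without neighbours outside `C`,
  then on `C` there are consecutive `u`, `y` such that `u` has a neighbour `w ∉ C` and `y` does not.
  Colour the complement of `C`, give `y` the colour of `w`, and go around the cycle from `y` to
  `u`: at `u` the two neighbours `w`, `y` share a colour (`properOn_univ_of_cycle`).
* As `G` is not complete, a vertex `v₂` of maximum degree has two nonadjacent neighbours `v₁`, `v₃`
  (`exists_induced_path`). Extend `v₁ v₂ v₃` to a path whose last vertex `y` has all its neighbours
  on the path, and close it up into a cycle by the edge from `y` to its first neighbour on the path.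
  If this cycle misses a vertex, the preceding case applies. Otherwise it is Hamiltonian. If
  `k ≥ 3`, give `v₁`, `v₃` the same colour and let `v` be a further neighbour of `v₂`; colour
  greedily the vertices strictly between `v₃` and `v`, then those from `y` back to `v`, and finally `v₂`
  (`properOn_univ_of_hamiltonian`). If `k = 2`, then `G` is a cycle (`iso_cycleGraph`), which is
  even by hypothesis.
-/

namespace BrooksProof

open SimpleGraph

variable {V : Type*} {G : SimpleGraph V} {k : ℕ}

/-! ### Partial colourings -/

/-- The partial colouring `c` is proper on the set `T`; its values outside `T` are irrelevant. -/
def ProperOn (G : SimpleGraph V) (c : V → Fin k) (T : Set V) : Prop :=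
  ∀ a ∈ T, ∀ b ∈ T, G.Adj a b → c a ≠ c b

lemma ProperOn.insert {c : V → Fin k} {T : Set V} (hc : ProperOn G c T) {x : V} (hx : x ∉ T)
    {γ : Fin k} (hγ : ∀ a ∈ T, G.Adj x a → c a ≠ γ) :
    ∃ c' : V → Fin k, c' x = γ ∧ (∀ a ∈ T, c' a = c a) ∧ ProperOn G c' (insert x T) := by
  classical
  have hne : ∀ a ∈ T, Function.update c x γ a = c a := fun a ha =>
    Function.update_of_ne (by rintro rfl; exact hx ha) _ _
  refine ⟨Function.update c x γ, by simp, hne, ?_⟩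
  rintro a (rfl | ha) b (rfl | hb) hab
  · exact absurd rfl hab.ne
  · rw [hne b hb, Function.update_self]
    exact (hγ b hb hab).symm
  · rw [hne a ha, Function.update_self]
    exact hγ a ha hab.symm
  · rw [hne a ha, hne b hb]
    exact hc a ha b hb hab

lemma exists_free (c : V → Fin k) (s : Finset V) (hs : s.card < k) :
    ∃ γ : Fin k, ∀ a ∈ s, c a ≠ γ := by
  classical
  have h : (s.image c).card < (Finset.univ : Finset (Fin k)).card := by
    simpa using Finset.card_image_le.trans_lt hs
  obtain ⟨γ, -, hγ⟩ := Finset.exists_mem_notMem_of_card_lt_card h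
  exact ⟨γ, fun a ha h => hγ (Finset.mem_image.2 ⟨a, ha, h⟩)⟩

/-! ### Boundary edges and splittings of lists -/

lemma exists_boundary (hconn : G.Connected) {T : Set V} (hne : T.Nonempty) (hT : T ≠ Set.univ) :
    ∃ a ∈ T, ∃ b ∉ T, G.Adj a b := by
  obtain ⟨u, hu⟩ := hne
  obtain ⟨v, hv⟩ := (Set.ne_univ_iff_exists_notMem T).1 hT
  obtain ⟨p⟩ := hconn.preconnected u v
  obtain ⟨d, -, h1, h2⟩ := p.exists_boundary_dart T hu hv
  exact ⟨_, h1, _, h2, d.adj⟩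

lemma exists_transition (p : V → Prop) (C : List V) (h : ∃ u ∈ C, p u)
    (hlast : ∀ y ∈ C.getLast?, ¬ p y) :
    ∃ A u y B, C = A ++ u :: y :: B ∧ p u ∧ ¬ p y := by
  induction C with
  | nil => simp at h
  | cons a C ih =>
    cases C with
    | nil => simp_all
    | cons b C =>
      by_cases hab : p a ∧ ¬ p b
      · exact ⟨[], a, b, C, rfl, hab⟩
      · obtain ⟨A, u, y, B, hC, hu, hy⟩ := ih (by
          obtain ⟨u, hu, hpu⟩ := h
          rcases List.mem_cons.1 hu with rfl | hu
          · exact ⟨b, by simp, by tauto⟩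
          · exact ⟨u, hu, hpu⟩) (by simpa using hlast)
        exact ⟨a :: A, u, y, B, by simp [hC], hu, hy⟩

lemma exists_first (p : V → Prop) (P : List V) (h : ∃ a ∈ P, p a) :
    ∃ A b B, P = A ++ b :: B ∧ p b ∧ ∀ a ∈ A, ¬ p a := by
  classical
  obtain ⟨a, ha, hpa⟩ := h
  obtain ⟨b, hb⟩ := Option.isSome_iff_exists.1
    (List.find?_isSome (p := fun a => decide (p a)) (xs := P) |>.2 ⟨a, ha, by simpa using hpa⟩)
  rw [List.find?_eq_some_iff_append] at hb
  obtain ⟨h1, A, B, rfl, h2⟩ := hb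
  exact ⟨A, b, B, rfl, by simpa using h1, by simpa using h2⟩

lemma ProperOn.colorable {c : V → Fin k} (hc : ProperOn G c Set.univ) : G.Colorable k :=
  ⟨Coloring.mk c fun {a b} hab => hc a trivial b trivial hab⟩

/-! ### Greedy extension of partial colourings -/

section Finite

variable [Fintype V] [DecidableRel G.Adj]

lemma card_erase_neighbor [DecidableEq V] (hk : ∀ v, G.degree v ≤ k) {x z : V}
    (h : G.Adj x z) : ((G.neighborFinset x).erase z).card < k := by
  have hz : z ∈ G.neighborFinset x := by simpa using h
  have h1 := Finset.card_erase_lt_of_mem hz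
  have h2 : (G.neighborFinset x).card ≤ k := by simpa using hk x
  omega

lemma exists_free_of_outside (hk : ∀ v, G.degree v ≤ k) (c : V → Fin k) {T : Set V} {x z : V}
    (h : G.Adj x z) (hz : z ∉ T) : ∃ γ : Fin k, ∀ a ∈ T, G.Adj x a → c a ≠ γ := by
  classical
  obtain ⟨γ, hγ⟩ := exists_free c _ (card_erase_neighbor hk h)
  refine ⟨γ, fun a ha hxa => hγ a ?_⟩
  simp only [Finset.mem_erase, mem_neighborFinset]
  exact ⟨fun h => hz (h ▸ ha), hxa⟩

lemma exists_free_of_repeat (hk : ∀ v, G.degree v ≤ k) (c : V → Fin k) {T : Set V} {x p q : V}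
    (hp : G.Adj x p) (hq : G.Adj x q) (hpq : p ≠ q) (hcol : c p = c q) :
    ∃ γ : Fin k, ∀ a ∈ T, G.Adj x a → c a ≠ γ := by
  classical
  obtain ⟨γ, hγ⟩ := exists_free c _ (card_erase_neighbor hk hq)
  refine ⟨γ, fun a _ hxa => ?_⟩
  by_cases haq : a = q
  · rw [haq, ← hcol]
    exact hγ p (by simp [hpq, hp])
  · exact hγ a (by simp [haq, hxa])

/-- Colour the vertices of the path `L`, `x` in order, stopping before `x`: each vertex of `L` is
reached while its successor is still uncoloured. -/
lemma greedy (hk : ∀ v, G.degree v ≤ k) (x : V) (L : List V) :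
    ∀ (c : V → Fin k) (T : Set V), ProperOn G c T → (L ++ [x]).IsChain G.Adj →
      (L ++ [x]).Nodup → (∀ a ∈ L ++ [x], a ∉ T) →
      ∃ c' : V → Fin k, (∀ a ∈ T, c' a = c a) ∧ ProperOn G c' (T ∪ {a | a ∈ L}) := by
  induction L with
  | nil => exact fun c T hc _ _ _ => ⟨c, fun _ _ => rfl, by simpa using hc⟩
  | cons a L ih =>
    intro c T hc hch hnd hT
    obtain ⟨z, hz, haz⟩ : ∃ z ∈ L ++ [x], G.Adj a z := by
      cases L with
      | nil => exact ⟨x, by simp, by simpa using hch⟩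
      | cons b L => exact ⟨b, by simp, by simp at hch; exact hch.1⟩
    obtain ⟨γ, hγ⟩ := exists_free_of_outside hk c haz (hT z (List.mem_cons_of_mem _ hz))
    obtain ⟨c₁, -, h₁, hc₁⟩ := hc.insert (hT a (by simp)) hγ
    rw [List.cons_append, List.nodup_cons] at hnd
    obtain ⟨c₂, h₂, hc₂⟩ := ih c₁ (insert a T) hc₁ hch.tail hnd.2 (by
      rintro b hb (rfl | hbT)
      · exact hnd.1 hb
      · exact hT b (List.mem_cons_of_mem _ hb) hbT)
    refine ⟨c₂, fun b hb => (h₂ b (Or.inr hb)).trans (h₁ b hb), ?_⟩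
    convert hc₂ using 1
    ext b
    simp only [Set.mem_union, Set.mem_ofPred_eq, List.mem_cons, Set.mem_insert_iff]
    tauto

/-- Induction on the size of `T`: colour last a vertex of `T` with a neighbour outside `T`. -/
lemma exists_properOn (hconn : G.Connected) (hk : ∀ v, G.degree v ≤ k) (hk0 : 0 < k) :
    ∀ (n : ℕ) (T : Set V), T.ncard = n → T ≠ Set.univ → ∃ c : V → Fin k, ProperOn G c T := by
  intro n
  induction n with
  | zero =>
    intro T hn _
    rw [Set.ncard_eq_zero] at hn
    exact ⟨fun _ => ⟨0, hk0⟩, by simp [hn, ProperOn]⟩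
  | succ n ih =>
    intro T hn hT
    obtain ⟨a, ha, b, hb, hab⟩ := exists_boundary hconn
      (Set.nonempty_of_ncard_ne_zero (by omega)) hT
    have hb' : b ∉ T \ {a} := fun h => hb h.1
    obtain ⟨c, hc⟩ := ih (T \ {a}) (by rw [Set.ncard_sdiff_singleton_of_mem ha, hn]; rfl)
      (fun h => hb' (h ▸ Set.mem_univ b))
    obtain ⟨γ, hγ⟩ := exists_free_of_outside hk c hab hb'
    obtain ⟨c', -, -, h⟩ := hc.insert (by simp) hγ
    rw [Set.insert_sdiff_singleton, Set.insert_eq_of_mem ha] at h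
    exact ⟨c', h⟩

/-! ### A cycle that misses a vertex -/

/-- The list `C` is a cycle, or a single edge if it has length two, with a vertex outside it, and
its last vertex has no neighbour outside it. -/
lemma properOn_univ_of_cycle (hconn : G.Connected) (hk : ∀ v, G.degree v ≤ k) (hk0 : 0 < k)
    (C : List V) (hch : C.IsChain G.Adj) (hnd : C.Nodup) (hne : C ≠ [])
    (hclose : ∀ a ∈ C.getLast?, ∀ b ∈ C.head?, G.Adj a b)
    (hlast : ∀ y ∈ C.getLast?, ∀ w, G.Adj y w → w ∈ C) {z : V} (hz : z ∉ C) :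
    ∃ c : V → Fin k, ProperOn G c Set.univ := by
  obtain ⟨a, ha, b, hb, hab⟩ := exists_boundary hconn (T := {a | a ∈ C})
    (List.exists_mem_of_ne_nil C hne) (fun h => hz (h ▸ Set.mem_univ z : z ∈ {a | a ∈ C}))
  obtain ⟨A, u, y, B, rfl, ⟨w, huw, hw⟩, hy⟩ :=
    exists_transition (fun u => ∃ w, G.Adj u w ∧ w ∉ C) C ⟨a, ha, b, hab, hb⟩ (by
      rintro y hy ⟨w, h1, h2⟩
      exact h2 (hlast y hy w h1))
  set C := A ++ u :: y :: B with hC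
  push Not at hy
  obtain ⟨c, hc⟩ := exists_properOn (k := k) hconn hk hk0 _ {a | a ∉ C} rfl (fun h =>
    (h ▸ Set.mem_univ u : u ∈ {a | a ∉ C}) (by simp [hC]))
  have hyC : y ∈ C := by simp [hC]
  obtain ⟨c₁, hy₁, h₁, hc₁⟩ := hc.insert (x := y) (γ := c w) (by simpa using hyC)
    (fun a ha hya => absurd (hy a hya) ha)
  have hrot : ((y :: B) ++ (A ++ [u])).IsChain G.Adj := by
    have h2 := hch
    rw [hC, List.isChain_split] at h2
    have h3 := h2.2
    rw [List.isChain_cons_cons] at h3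
    rw [List.isChain_append]
    refine ⟨h3.2, h2.1, fun a ha b hb => hclose a ?_ b ?_⟩
    · simpa [hC, List.getLast?_append] using ha
    · cases A <;> simpa [hC] using hb
  have hperm : ((y :: B) ++ (A ++ [u])).Perm C := by
    rw [hC, show A ++ u :: y :: B = (A ++ [u]) ++ (y :: B) by simp]
    exact List.perm_append_comm
  have hnd' := hperm.nodup_iff.2 hnd
  have hassoc : (y :: B) ++ (A ++ [u]) = y :: ((B ++ A) ++ [u]) := by simp
  rw [hassoc] at hrot hnd' hperm
  obtain ⟨c₂, h₂, hc₂⟩ := greedy hk u (B ++ A) c₁ _ hc₁ hrot.tail (List.nodup_cons.1 hnd').2 (by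
    rintro a ha (hay | haC)
    · exact (List.nodup_cons.1 hnd').1 (hay ▸ ha)
    · exact haC (hperm.mem_iff.1 (List.mem_cons_of_mem _ ha)))
  have hadj : G.Adj u y := by
    rw [hC, List.isChain_append_cons_cons] at hch
    exact hch.2.1
  have hcol : c₂ w = c₂ y := by
    rw [h₂ w (Or.inr hw), h₁ w hw, h₂ y (Or.inl rfl), hy₁]
  obtain ⟨γ, hγ⟩ := exists_free_of_repeat hk c₂ huw hadj (fun h => hw (h ▸ hyC)) hcol
  have hu_notMem : u ∉ insert y {a | a ∉ C} ∪ {a | a ∈ B ++ A} := by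
    have huC : u ∈ C := by simp [hC]
    have huBA : u ∉ B ++ A := by
      intro h
      have := (List.nodup_append.1 (List.nodup_cons.1 hnd').2).2.2 u h u (by simp)
      exact this rfl
    rintro ((h | h) | h)
    · exact hadj.ne h
    · exact h huC
    · exact huBA h
  obtain ⟨c₃, -, -, hc₃⟩ := hc₂.insert hu_notMem hγ
  refine ⟨c₃, ?_⟩
  convert hc₃ using 1
  symm
  rw [Set.eq_univ_iff_forall]
  intro a
  simp only [hC, Set.mem_insert_iff, Set.mem_union, Set.mem_ofPred_eq, List.mem_append,
    List.mem_cons]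
  tauto

/-! ### Choice of the path -/

lemma exists_maximal_path (n : ℕ) : ∀ L : List V, Fintype.card V - L.length = n →
    L.IsChain G.Adj → L.Nodup →
    ∃ Q, (L ++ Q).IsChain G.Adj ∧ (L ++ Q).Nodup ∧
      ∀ y ∈ (L ++ Q).getLast?, ∀ w, G.Adj y w → w ∈ L ++ Q := by
  induction n using Nat.strong_induction_on with
  | _ n ih =>
    intro L hn hch hnd
    by_cases h : ∀ y ∈ L.getLast?, ∀ w, G.Adj y w → w ∈ L
    · exact ⟨[], by simpa using ⟨hch, hnd, h⟩⟩
    · push Not at h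
      obtain ⟨y, hy, w, hyw, hw⟩ := h
      have hnd' : (L ++ [w]).Nodup := by
        rw [List.nodup_append]
        refine ⟨hnd, by simp, ?_⟩
        rintro a ha b hb rfl
        simp only [List.mem_singleton] at hb
        exact hw (hb ▸ ha)
      have hlen := hnd'.length_le_card
      simp only [List.length_append, List.length_singleton] at hlen
      obtain ⟨Q, h1, h2, h3⟩ := ih _
        (by simp only [List.length_append, List.length_singleton]; omega) (L ++ [w]) rfl (by
        rw [List.isChain_append]
        refine ⟨hch, by simp, ?_⟩
        intro a ha b hb
        simp only [List.head?_cons, Option.mem_def, Option.some.injEq] at hb ha hy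
        rw [hy] at ha
        cases ha
        exact hb ▸ hyw) hnd'
      simp only [List.append_assoc, List.singleton_append] at h1 h2 h3
      exact ⟨w :: Q, h1, h2, h3⟩

/-- A vertex `v` of maximum degree together with its neighbours would otherwise be a clique, in
which every vertex already has maximum degree, so that nothing else is connected to it. -/
lemma exists_induced_path (hconn : G.Connected) (hnc : G ≠ ⊤) (hk : ∀ v, G.degree v ≤ k) {v : V}
    (hv : G.degree v = k) : ∃ a b, G.Adj v a ∧ G.Adj v b ∧ a ≠ b ∧ ¬ G.Adj a b := by
  classical
  by_contra! hcl
  set S : Finset V := insert v (G.neighborFinset v) with hS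
  have hcard : S.card = k + 1 := by
    rw [hS, Finset.card_insert_of_notMem (by simp), card_neighborFinset_eq_degree, hv]
  have hclique : ∀ a ∈ S, ∀ b ∈ S, a ≠ b → G.Adj a b := by
    intro a ha b hb hab
    simp only [hS, Finset.mem_insert, mem_neighborFinset] at ha hb
    rcases ha with rfl | ha <;> rcases hb with rfl | hb
    · exact absurd rfl hab
    · exact hb
    · exact ha.symm
    · exact hcl a b ha hb hab
  have huniv : (S : Set V) = Set.univ := by
    by_contra hne
    obtain ⟨a, ha, b, hb, hab⟩ := exists_boundary hconn ⟨v, by simp [hS]⟩ hne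
    have hsub : insert b (S.erase a) ⊆ G.neighborFinset a := by
      intro x hx
      rw [mem_neighborFinset]
      rcases Finset.mem_insert.1 hx with rfl | hx
      · exact hab
      · exact hclique a ha x (Finset.mem_of_mem_erase hx) (Finset.ne_of_mem_erase hx).symm
    have hle := Finset.card_le_card hsub
    rw [Finset.card_insert_of_notMem (fun h => hb (Finset.mem_of_mem_erase h)),
      Finset.card_erase_of_mem ha, hcard, card_neighborFinset_eq_degree] at hle
    have := hk a
    omega
  apply hnc
  ext a b
  rw [top_adj]
  have hmem : ∀ a, a ∈ S := fun a => by
    have : a ∈ (S : Set V) := huniv ▸ Set.mem_univ a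
    exact this
  exact ⟨fun h => h.ne, hclique a (hmem a) b (hmem b)⟩

/-! ### Hamiltonian cycles -/

lemma properOn_univ_of_hamiltonian (hk : ∀ v, G.degree v ≤ k) (hk3 : 3 ≤ k) {v₁ v₂ v₃ : V}
    {Q : List V} (hch : (v₁ :: v₂ :: v₃ :: Q).IsChain G.Adj) (hnd : (v₁ :: v₂ :: v₃ :: Q).Nodup)
    (hcov : ∀ x, x ∈ v₁ :: v₂ :: v₃ :: Q) (h13 : ¬ G.Adj v₁ v₃) (hv₂ : G.degree v₂ = k) :
    ∃ c : V → Fin k, ProperOn G c Set.univ := by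
  classical
  obtain ⟨v, hv, hv₂v⟩ : ∃ v ∈ Q, G.Adj v₂ v := by
    by_contra! h
    have hsub : G.neighborFinset v₂ ⊆ {v₁, v₃} := by
      intro x hx
      rw [mem_neighborFinset] at hx
      have := hcov x
      simp only [List.mem_cons] at this
      simp only [Finset.mem_insert, Finset.mem_singleton]
      rcases this with h' | rfl | h' | h'
      · exact Or.inl h'
      · exact absurd rfl hx.ne
      · exact Or.inr h'
      · exact absurd hx (h x h')
    have h1 := Finset.card_le_card hsub
    rw [card_neighborFinset_eq_degree, hv₂] at h1
    have := Finset.card_le_two (a := v₁) (b := v₃)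
    omega
  obtain ⟨A, B, rfl⟩ := List.append_of_mem hv
  simp only [List.isChain_cons_cons] at hch
  obtain ⟨h12, h23, hch⟩ := hch
  replace hch := hch.tail
  simp only [List.tail_cons] at hch
  rw [List.isChain_split] at hch
  simp only [List.nodup_cons, List.mem_cons, List.mem_append, List.nodup_append, not_or] at hnd
  obtain ⟨⟨n12, n13, n1A, n1v, n1B⟩, ⟨n23, n2A, n2v, n2B⟩, ⟨n3A, n3v, n3B⟩, ndA, ⟨nvB, ndB⟩, hAB⟩ :=
    hnd
  have hc : ProperOn G (fun _ => (⟨0, by omega⟩ : Fin k)) {v₁, v₃} := by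
    rintro a (rfl | rfl) b (rfl | rfl) hab
    · exact absurd rfl hab.ne
    · exact absurd hab h13
    · exact absurd hab.symm h13
    · exact absurd rfl hab.ne
  obtain ⟨c₁, h₁, hc₁⟩ := greedy hk v A _ _ hc hch.1
    (by
      rw [List.nodup_append]
      exact ⟨ndA, by simp, fun a ha b hb => hAB a ha b (by simp_all)⟩)
    (by
      intro a ha h
      simp only [Set.mem_insert_iff, Set.mem_singleton_iff] at h
      simp only [List.mem_append, List.mem_singleton] at ha
      rcases h with rfl | rfl <;> rcases ha with h | h <;> tauto)
  have hrev : (B.reverse ++ [v] ++ [v₂]).IsChain G.Adj := by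
    have h : (v₂ :: v :: B).reverse.IsChain G.Adj := by
      rw [List.isChain_reverse]
      have : (v₂ :: v :: B).IsChain G.Adj := List.isChain_cons_cons.2 ⟨hv₂v, hch.2⟩
      exact this.imp (fun _ _ h => h.symm)
    simpa using h
  -- The vertex `v` is coloured last but one, while its neighbour `v₂` is still uncoloured.
  obtain ⟨c₂, h₂, hc₂⟩ := greedy hk v₂ (B.reverse ++ [v]) c₁ _ hc₁ hrev
    (by
      have : (v₂ :: v :: B).reverse.Nodup := by
        rw [List.nodup_reverse]
        simp only [List.nodup_cons, List.mem_cons, not_or]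
        exact ⟨⟨n2v, n2B⟩, nvB, ndB⟩
      simpa using this)
    (by
      intro a ha h
      simp only [Set.mem_insert_iff, Set.mem_singleton_iff, Set.mem_union, Set.mem_ofPred_eq] at h
      simp only [List.mem_append, List.mem_singleton, List.mem_reverse] at ha
      rcases ha with (ha | rfl) | rfl
      · rcases h with (rfl | rfl) | h
        · tauto
        · tauto
        · exact hAB a h a (by simp [ha]) rfl
      · rcases h with (rfl | rfl) | h
        · tauto
        · tauto
        · exact hAB a h a (by simp) rfl
      · rcases h with (rfl | rfl) | h <;> tauto)
  have hcol : c₂ v₁ = c₂ v₃ := by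
    rw [h₂ v₁ (by simp), h₂ v₃ (by simp), h₁ v₁ (by simp), h₁ v₃ (by simp)]
  obtain ⟨γ, hγ⟩ := exists_free_of_repeat hk c₂ h12.symm h23 n13 hcol
  obtain ⟨c₃, -, -, hc₃⟩ := hc₂.insert (x := v₂) (by
    simp only [Set.mem_insert_iff, Set.mem_singleton_iff, Set.mem_union, Set.mem_ofPred_eq,
      List.mem_append, List.mem_singleton, List.mem_reverse]
    have := Ne.symm n12
    tauto) hγ
  refine ⟨c₃, ?_⟩
  convert hc₃ using 1
  symm
  rw [Set.eq_univ_iff_forall]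
  intro a
  have := hcov a
  simp only [List.mem_cons, List.mem_append] at this
  simp only [Set.mem_insert_iff, Set.mem_singleton_iff, Set.mem_union, Set.mem_ofPred_eq,
      List.mem_append, List.mem_singleton, List.mem_reverse]
  tauto

lemma iso_cycleGraph (hk : ∀ v, G.degree v ≤ 2) (P : List V) (n : ℕ) (hlen : P.length = n + 3)
    (hch : P.IsChain G.Adj) (hnd : P.Nodup) (hcov : ∀ x, x ∈ P)
    (hclose : ∀ a ∈ P.getLast?, ∀ b ∈ P.head?, G.Adj a b) :
    Nonempty (G ≃g cycleGraph (n + 3)) := by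
  classical
  let f : Fin (n + 3) → V := fun i => P[i.val]'(by omega)
  have hf : Function.Bijective f := by
    constructor
    · intro i j hij
      exact Fin.ext ((hnd.getElem_inj_iff).1 hij)
    · intro x
      obtain ⟨i, hi, rfl⟩ := List.mem_iff_getElem.1 (hcov x)
      exact ⟨⟨i, by omega⟩, rfl⟩
  have hsucc : ∀ i, G.Adj (f i) (f (i + 1)) := by
    intro i
    by_cases hi : i = Fin.last (n + 2)
    · apply hclose
      · subst hi
        simp [f, List.getLast?_eq_getElem?, hlen]
      · subst hi
        simp [f, List.head?_eq_getElem?]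
    · have hval : (i + 1).val = i.val + 1 := Fin.val_add_one_of_lt (Fin.lt_last_iff_ne_last.2 hi)
      simp only [f, hval]
      exact List.isChain_iff_getElem.1 hch _ _
  have hmap : ∀ i j, (cycleGraph (n + 3)).Adj i j → G.Adj (f i) (f j) := by
    intro i j hij
    rw [cycleGraph_adj] at hij
    rcases hij with h | h
    · rw [sub_eq_iff_eq_add'.1 h, add_comm]
      exact (add_comm 1 j ▸ hsucc j).symm
    · rw [sub_eq_iff_eq_add'.1 h]
      exact hsucc i
  -- Both graphs have at most two neighbours at each vertex, and the cycle has exactly two.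
  have hnb : ∀ i, ((cycleGraph (n + 3)).neighborFinset i).image f = G.neighborFinset (f i) := by
    intro i
    apply Finset.eq_of_subset_of_card_le
    · intro x hx
      obtain ⟨j, hj, rfl⟩ := Finset.mem_image.1 hx
      rw [mem_neighborFinset] at hj ⊢
      exact hmap i j hj
    · rw [Finset.card_image_of_injective _ hf.1, card_neighborFinset_eq_degree,
        card_neighborFinset_eq_degree, cycleGraph_degree_three_le]
      exact hk _
  refine ⟨RelIso.symm ⟨Equiv.ofBijective f hf, ?_⟩⟩
  intro i j
  refine ⟨fun h => ?_, hmap i j⟩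
  have : f j ∈ G.neighborFinset (f i) := by simpa using h
  rw [← hnb, Finset.mem_image] at this
  obtain ⟨j', hj', hjj⟩ := this
  rw [← hf.1 hjj]
  simpa using hj'

end Finite

end BrooksProof

/-! ### Brooks' theorem -/

open BrooksProof in
theorem brooks {V : Type*} [Fintype V] (G : SimpleGraph V) [DecidableRel G.Adj]
    (hc : G.Connected) (hnc : G ≠ ⊤)
    (hno : ¬ ∃ n : ℕ, Odd n ∧ Nonempty (G ≃g SimpleGraph.cycleGraph n)) :
    G.chromaticNumber ≤ G.maxDegree := by
  classical
  apply SimpleGraph.Colorable.chromaticNumber_le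
  have hk : ∀ v, G.degree v ≤ G.maxDegree := G.degree_le_maxDegree
  have := hc.nonempty
  obtain ⟨v₂, hv₂⟩ := G.exists_maximal_degree_vertex
  obtain ⟨v₁, v₃, h21, h23, hne13, h13⟩ := exists_induced_path hc hnc hk hv₂.symm
  have hk2 : 2 ≤ G.maxDegree := by
    have hsub : ({v₁, v₃} : Finset V) ⊆ G.neighborFinset v₂ := by
      simp [Finset.insert_subset_iff, h21, h23]
    have := Finset.card_le_card hsub
    rw [Finset.card_pair hne13, SimpleGraph.card_neighborFinset_eq_degree] at this
    omega
  obtain ⟨Q, hch, hnd, hmax⟩ := exists_maximal_path (G := G) _ [v₁, v₂, v₃] rfl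
    (by simp [h21.symm, h23]) (by simp [h21.ne', h23.ne, hne13])
  simp only [List.cons_append, List.nil_append] at hch hnd hmax
  set P := v₁ :: v₂ :: v₃ :: Q with hP
  obtain ⟨y, hy⟩ : ∃ y, P.getLast? = some y := ⟨_, List.getLast?_eq_some_getLast (by simp [hP])⟩
  have hynb : ∃ a ∈ P, G.Adj y a := by
    obtain ⟨R, hR⟩ := List.getLast?_eq_some_iff.1 hy
    obtain ⟨S, x, rfl⟩ : ∃ S x, R = S ++ [x] := by
      rcases List.eq_nil_or_concat' R with rfl | h
      · simp [hP] at hR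
      · exact h
    rw [hR] at hch ⊢
    rw [List.append_assoc, List.singleton_append, List.isChain_append_cons_cons] at hch
    exact ⟨x, by simp, hch.2.1.symm⟩
  obtain ⟨A, b, B, hAB, hyb, hA⟩ := exists_first (fun a => G.Adj y a) P hynb
  have hlastC : (b :: B).getLast? = some y := by
    rw [hAB, List.getLast?_append_of_ne_nil _ (by simp)] at hy
    exact hy
  have hchC : (b :: B).IsChain G.Adj := by
    rw [hAB, List.isChain_append] at hch
    exact hch.2.1
  have hndC : (b :: B).Nodup := by
    rw [hAB, List.nodup_append] at hnd
    exact hnd.2.1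
  have hclose : ∀ a ∈ (b :: B).getLast?, ∀ b' ∈ (b :: B).head?, G.Adj a b' := by
    intro a ha b' hb'
    rw [hlastC] at ha
    simp only [List.head?_cons, Option.mem_def, Option.some.injEq] at ha hb'
    exact ha ▸ hb' ▸ hyb
  by_cases hz : ∃ z, z ∉ b :: B
  · obtain ⟨z, hz⟩ := hz
    obtain ⟨c, hcol⟩ := properOn_univ_of_cycle hc hk (by omega) (b :: B) hchC hndC (by simp) hclose
      (by
        intro y' hy' w hw
        obtain rfl : y = y' := by rw [hlastC] at hy'; exact Option.some.inj hy'
        have hwP := hmax y hy w hw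
        rw [hAB, List.mem_append] at hwP
        exact hwP.resolve_left fun h => hA w h hw) hz
    exact hcol.colorable
  · push Not at hz
    obtain rfl : A = [] := by
      rw [List.eq_nil_iff_forall_not_mem]
      intro a ha
      rw [hAB, List.nodup_append] at hnd
      exact hnd.2.2 a ha a (hz a) rfl
    rw [List.nil_append] at hAB
    rw [← hAB] at hclose hz
    by_cases hk3 : 3 ≤ G.maxDegree
    · obtain ⟨c, hcol⟩ := properOn_univ_of_hamiltonian hk hk3 hch hnd hz h13 hv₂.symm
      exact hcol.colorable
    · have hk_eq : G.maxDegree = 2 := by omega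
      obtain ⟨φ⟩ := iso_cycleGraph (fun v => hk_eq ▸ hk v) P Q.length (by simp [hP]) hch hnd hz hclose
      have heven : Even (Q.length + 3) := by
        by_contra h
        exact hno ⟨_, Nat.not_even_iff_odd.1 h, ⟨φ⟩⟩
      have h2 : (SimpleGraph.cycleGraph (Q.length + 3)).Colorable 2 := by
        simpa using (SimpleGraph.cycleGraph.bicoloring_of_even _ heven).colorable
      rw [hk_eq]
      exact h2.of_hom φ.toHom
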